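/- arXiv:2007.02223 — 7 statements merged into one kernel-verified Lean document; each statement's English description precedes it below -/
import Mathlib

section
/- Let H ∈ (1/2,1). There exists a constant C depending only on H such that for every ρ ∈ [0,H], every λ > 0 and all real numbers 0 ≤ s < t, one has λ^{2ρ} ∫ₛᵗ ∫ₛᵗ e^{−λ(t−u)} e^{−λ(t−v)} H(2H−1)|u−v|^{2H−2} du dv ≤ C (t−s)^{2(H−ρ)}. -/
/-!
Put `L = t - s` and `m = min L λ⁻¹`. For `u, v ≤ t` both `|u - v|` and `t - v` are at most
`(t - u) + (t - v)`, hence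
`e^{-λ(t-u)} e^{-λ(t-v)} ≤ e^{-λ(t-v)/2} e^{-λ|u-v|/2}`.
This decouples the double integral: the inner one is controlled by
`∫₀ᵃ w^{2H-2} e^{-λw/2} dw` with `a ≤ L`, the outer one by `∫₀ᴸ e^{-λw/2} dw`. Both are instances of
`∫₀ᵃ w^{p-1} e^{-λw/2} dw ≤ K(p) m^p` (`integral_expKernel_le`), where `L^p` comes from dropping the
exponential and `λ^{-p}` from extending to the Gamma integral. So the double integral is at most
`C m^{2H}`, and `λ^{2ρ} m^{2H} = (λm)^{2ρ} m^{2(H-ρ)} ≤ L^{2(H-ρ)}` since `λm ≤ 1` and `m ≤ L`.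
-/

open Real MeasureTheory

/-- The even kernel `w ↦ |w|^{p-1} e^{-λ|w|/2}`. -/
noncomputable def expKernel (p lam w : ℝ) : ℝ :=
  |w| ^ (p - 1) * Real.exp (-(lam / 2 * |w|))

/-- The constant `K(p) = 1/p + 2^p Γ(p)` in the bound of the truncated Gamma integral. -/
noncomputable def kernelConst (p : ℝ) : ℝ := 1 / p + 2 ^ p * Real.Gamma p

lemma kernelConst_pos {p : ℝ} (hp : 0 < p) : 0 < kernelConst p := by
  have := Real.Gamma_pos_of_pos hp
  unfold kernelConst
  positivity

lemma intervalIntegrable_expKernel {p : ℝ} (hp : 0 < p) (lam a b : ℝ) :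
    IntervalIntegrable (expKernel p lam) volume a b := by
  refine intervalIntegrable_of_even ?_ ?_ (ha := enorm_ne_top) (hb := enorm_ne_top)
  · intro x
    simp [expKernel]
  · intro x hx
    have h : IntervalIntegrable (fun w : ℝ => w ^ (p - 1) * Real.exp (-(lam / 2 * |w|)))
        volume 0 x :=
      (intervalIntegral.intervalIntegrable_rpow' (by linarith)).mul_continuousOn
        (by fun_prop)
    refine h.congr fun w hw => ?_
    rw [Set.uIoc_of_le hx.le] at hw
    simp [expKernel, abs_of_pos hw.1]

lemma integral_expKernel_le {p lam L a : ℝ} (hp : 0 < p) (hlam : 0 < lam)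
    (ha : 0 ≤ a) (haL : a ≤ L) :
    ∫ w in (0 : ℝ)..a, expKernel p lam w ≤ kernelConst p * (min L lam⁻¹) ^ p := by
  have hΓ := Real.Gamma_pos_of_pos hp
  have h1 : ∫ w in (0 : ℝ)..a, expKernel p lam w ≤ 1 / p * L ^ p := by
    calc ∫ w in (0 : ℝ)..a, expKernel p lam w
        ≤ ∫ w in (0 : ℝ)..a, w ^ (p - 1) := by
          refine intervalIntegral.integral_mono_on ha (intervalIntegrable_expKernel hp _ _ _)
            (intervalIntegral.intervalIntegrable_rpow' (by linarith)) fun w hw => ?_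
          have hw0 : 0 ≤ w := hw.1
          rw [expKernel, abs_of_nonneg hw0]
          refine mul_le_of_le_one_right (by positivity) (Real.exp_le_one_iff.2 ?_)
          have : 0 ≤ lam / 2 * w := by positivity
          linarith
      _ = 1 / p * a ^ p := by
          rw [integral_rpow (Or.inl (by linarith))]
          simp [Real.zero_rpow hp.ne']
          ring
      _ ≤ 1 / p * L ^ p := by gcongr
  have h2 : ∫ w in (0 : ℝ)..a, expKernel p lam w ≤ 2 ^ p * Real.Gamma p * (lam⁻¹) ^ p := by
    have hG := Real.integral_rpow_mul_exp_neg_mul_Ioi hp (half_pos hlam)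
    have hpos : 0 < (1 / (lam / 2)) ^ p * Real.Gamma p := by positivity
    -- A nonzero Bochner integral is the integral of an integrable function.
    have hint : IntegrableOn (fun w : ℝ => w ^ (p - 1) * Real.exp (-(lam / 2 * w)))
        (Set.Ioi 0) := by
      by_contra hn
      rw [integral_undef hn] at hG
      linarith
    calc ∫ w in (0 : ℝ)..a, expKernel p lam w
        = ∫ w in Set.Ioc 0 a, w ^ (p - 1) * Real.exp (-(lam / 2 * w)) := by
          rw [intervalIntegral.integral_of_le ha]
          refine setIntegral_congr_fun measurableSet_Ioc fun w hw => ?_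
          simp [expKernel, abs_of_pos hw.1]
      _ ≤ ∫ w in Set.Ioi 0, w ^ (p - 1) * Real.exp (-(lam / 2 * w)) := by
          refine setIntegral_mono_set hint ?_ (Set.Ioc_subset_Ioi_self.eventuallyLE)
          filter_upwards [ae_restrict_mem measurableSet_Ioi] with w hw
          have : 0 < w := hw
          simp only [Pi.zero_apply]
          positivity
      _ = 2 ^ p * Real.Gamma p * (lam⁻¹) ^ p := by
          rw [hG, show 1 / (lam / 2) = 2 * lam⁻¹ by field_simp,
            Real.mul_rpow (by norm_num) (by positivity)]
          ring
  have hc1 : 1 / p ≤ kernelConst p := by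
    unfold kernelConst
    have : 0 < 2 ^ p * Real.Gamma p := by positivity
    linarith
  have hc2 : 2 ^ p * Real.Gamma p ≤ kernelConst p := by
    unfold kernelConst
    have : 0 < 1 / p := by positivity
    linarith
  rcases min_choice L lam⁻¹ with h | h <;> rw [h]
  · have hL : 0 ≤ L := ha.trans haL
    exact h1.trans (by gcongr)
  · exact h2.trans (by gcongr)

lemma integral_expKernel_sub_le {p lam s t v : ℝ} (hp : 0 < p) (hlam : 0 < lam)
    (hsv : s ≤ v) (hvt : v ≤ t) :
    ∫ u in s..t, expKernel p lam (u - v)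
      ≤ 2 * (kernelConst p * (min (t - s) lam⁻¹) ^ p) := by
  rw [intervalIntegral.integral_comp_sub_right (expKernel p lam),
    ← intervalIntegral.integral_add_adjacent_intervals (b := 0)
      (intervalIntegrable_expKernel hp _ _ _) (intervalIntegrable_expKernel hp _ _ _)]
  have heven : ∫ w in (s - v)..0, expKernel p lam w
      = ∫ w in (0 : ℝ)..(v - s), expKernel p lam w := by
    have h := intervalIntegral.integral_comp_neg (a := 0) (b := v - s) (expKernel p lam)
    rw [neg_sub, neg_zero] at h
    rw [← h]
    simp [expKernel]
  rw [heven]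
  have h1 := integral_expKernel_le (L := t - s) (a := v - s) hp hlam (by linarith) (by linarith)
  have h2 := integral_expKernel_le (L := t - s) (a := t - v) hp hlam (by linarith) (by linarith)
  linarith

lemma integral_exp_le {lam s t : ℝ} (hlam : 0 < lam) (hst : s ≤ t) :
    ∫ v in s..t, Real.exp (-(lam / 2 * (t - v)))
      ≤ kernelConst 1 * min (t - s) lam⁻¹ := by
  have h := integral_expKernel_le (p := 1) (L := t - s) (a := t - s) one_pos hlam
    (by linarith) le_rfl
  rw [Real.rpow_one] at h
  refine le_trans (le_of_eq ?_) h
  rw [intervalIntegral.integral_comp_sub_left (fun w => Real.exp (-(lam / 2 * w))), sub_self]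
  refine intervalIntegral.integral_congr fun w hw => ?_
  rw [Set.uIcc_of_le (by linarith)] at hw
  simp [expKernel, abs_of_nonneg hw.1]

/-- The decoupling inequality `e^{-λ(t-u)} e^{-λ(t-v)} ≤ e^{-λ(t-v)/2} e^{-λ|u-v|/2}`. -/
lemma exp_mul_exp_le {lam t u v : ℝ} (hlam : 0 < lam) (hu : u ≤ t) (hv : v ≤ t) :
    Real.exp (-lam * (t - u)) * Real.exp (-lam * (t - v))
      ≤ Real.exp (-(lam / 2 * (t - v))) * Real.exp (-(lam / 2 * |u - v|)) := by
  rw [← Real.exp_add, ← Real.exp_add, Real.exp_le_exp]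
  have h1 : |u - v| ≤ (t - u) + (t - v) := abs_le.2 ⟨by linarith, by linarith⟩
  nlinarith [mul_le_mul_of_nonneg_left h1 hlam.le, mul_nonneg hlam.le (sub_nonneg.2 hu)]

/-- The double integral is at most a constant times `m^{2H}`, `m = min (t - s) λ⁻¹`. -/
lemma integral_integral_le {H : ℝ} (hH : H ∈ Set.Ioo (1/2 : ℝ) 1) {lam s t : ℝ}
    (hlam : 0 < lam) (hst : s < t) :
    ∫ v in s..t, ∫ u in s..t,
        Real.exp (-lam*(t-u)) * Real.exp (-lam*(t-v)) * (H * (2*H - 1) * |u - v| ^ (2*H - 2))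
      ≤ (H * (2*H - 1) * (2 * kernelConst (2*H - 1)) * kernelConst 1)
          * (min (t - s) lam⁻¹) ^ (2*H) := by
  obtain ⟨hH1, hH2⟩ := hH
  have hp : 0 < 2*H - 1 := by linarith
  have hc : 0 < H * (2*H - 1) := mul_pos (by linarith) hp
  have hm : 0 < min (t - s) lam⁻¹ := lt_min (by linarith) (by positivity)
  set m := min (t - s) lam⁻¹ with hmdef
  have hK := kernelConst_pos hp
  set D : ℝ := H * (2*H - 1) * (2 * (kernelConst (2*H - 1) * m ^ (2*H - 1))) with hD
  have hD0 : 0 ≤ D := by positivity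
  -- The norm bounds below need integrability of the majorants only.
  have inner : ∀ v, v ∈ Set.Ioc s t → ‖∫ u in s..t,
      Real.exp (-lam*(t-u)) * Real.exp (-lam*(t-v)) * (H * (2*H - 1) * |u - v| ^ (2*H - 2))‖
      ≤ D * Real.exp (-(lam / 2 * (t - v))) := by
    intro v hv
    calc _ ≤ ∫ u in s..t, (H * (2*H - 1) * Real.exp (-(lam / 2 * (t - v))))
              * expKernel (2*H - 1) lam (u - v) := by
          refine intervalIntegral.norm_integral_le_of_norm_le hst.le
            (Filter.Eventually.of_forall fun u hu => ?_) ?_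
          · rw [Real.norm_of_nonneg (by positivity), expKernel,
              show 2*H - 1 - 1 = 2*H - 2 by ring]
            calc _ ≤ (Real.exp (-(lam / 2 * (t - v))) * Real.exp (-(lam / 2 * |u - v|)))
                    * (H * (2*H - 1) * |u - v| ^ (2*H - 2)) :=
                  mul_le_mul_of_nonneg_right (exp_mul_exp_le hlam hu.2 hv.2) (by positivity)
              _ = _ := by ring
          · refine IntervalIntegrable.const_mul ?_ _
            have h := (intervalIntegrable_expKernel hp lam (s - v) (t - v)).comp_sub_right v
            simpa using h
      _ ≤ _ := by
          rw [intervalIntegral.integral_const_mul, hD]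
          calc _ ≤ (H * (2*H - 1) * Real.exp (-(lam / 2 * (t - v))))
                  * (2 * (kernelConst (2*H - 1) * m ^ (2*H - 1))) :=
                mul_le_mul_of_nonneg_left (integral_expKernel_sub_le hp hlam hv.1.le hv.2)
                  (by positivity)
            _ = _ := by ring
  calc _ ≤ ∫ v in s..t, D * Real.exp (-(lam / 2 * (t - v))) :=
        (le_abs_self _).trans (intervalIntegral.norm_integral_le_of_norm_le hst.le
          (Filter.Eventually.of_forall inner)
          (Continuous.intervalIntegrable (by fun_prop) _ _))
    _ ≤ D * (kernelConst 1 * m) := by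
        rw [intervalIntegral.integral_const_mul]
        exact mul_le_mul_of_nonneg_left (integral_exp_le hlam hst.le) hD0
    _ = _ := by
        have h : m ^ (2*H) = m ^ (2*H - 1) * m := by
          rw [← Real.rpow_add_one hm.ne']
          ring_nf
        rw [h, hD]
        ring

/-- Scalar form of the smoothing estimate for the stochastic convolution against
a fractional Brownian kernel: for `H ∈ (1/2,1)` there is a constant `C = C(H)` such that
for all `ρ ∈ [0,H]`, `λ > 0` and `0 ≤ s < t`,
`λ^(2ρ) ∫ₛᵗ∫ₛᵗ e^{-λ(t-u)} e^{-λ(t-v)} H(2H-1)|u-v|^(2H-2) du dv ≤ C (t-s)^(2(H-ρ))`. -/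
theorem smoothing_estimate_scalar
    (H : ℝ) (hH : H ∈ Set.Ioo (1/2 : ℝ) 1) :
    ∃ C : ℝ, 0 < C ∧ ∀ ρ lam s t : ℝ, ρ ∈ Set.Icc 0 H → 0 < lam → 0 ≤ s → s < t →
      lam ^ (2*ρ) *
        ∫ v in s..t, ∫ u in s..t,
          Real.exp (-lam*(t-u)) * Real.exp (-lam*(t-v)) * (H * (2*H - 1) * |u - v| ^ (2*H - 2))
      ≤ C * (t - s) ^ (2*(H - ρ)) := by
  have hp : 0 < 2*H - 1 := by linarith [hH.1]
  have hc : 0 < H * (2*H - 1) := mul_pos (by linarith) hp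
  have hK := kernelConst_pos hp
  have hK1 := kernelConst_pos one_pos
  have hC : 0 < H * (2*H - 1) * (2 * kernelConst (2*H - 1)) * kernelConst 1 := by positivity
  refine ⟨_, hC, fun ρ lam s t hρ hlam _ hst => ?_⟩
  have hI := integral_integral_le hH hlam hst
  generalize H * (2*H - 1) * (2 * kernelConst (2*H - 1)) * kernelConst 1 = C at hC hI ⊢
  have hm : 0 < min (t - s) lam⁻¹ := lt_min (by linarith) (by positivity)
  have hmL : min (t - s) lam⁻¹ ≤ t - s := min_le_left _ _
  have hml : min (t - s) lam⁻¹ ≤ lam⁻¹ := min_le_right _ _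
  generalize min (t - s) lam⁻¹ = m at hI hm hmL hml
  have hlm : lam * m ≤ 1 := by
    calc lam * m ≤ lam * lam⁻¹ := by gcongr
      _ = 1 := mul_inv_cancel₀ hlam.ne'
  calc _ ≤ lam ^ (2*ρ) * (C * m ^ (2*H)) := by gcongr
    _ = C * ((lam * m) ^ (2*ρ) * m ^ (2*(H - ρ))) := by
        rw [Real.mul_rpow hlam.le hm.le, mul_assoc (lam ^ (2*ρ)), ← Real.rpow_add hm,
          show 2*ρ + 2*(H - ρ) = 2*H by ring]
        ring
    _ ≤ C * (1 * (t - s) ^ (2*(H - ρ))) := by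
        have h1 : (lam * m) ^ (2*ρ) ≤ 1 :=
          Real.rpow_le_one (by positivity) hlm (by linarith [hρ.1])
        have h2 : m ^ (2*(H - ρ)) ≤ (t - s) ^ (2*(H - ρ)) :=
          Real.rpow_le_rpow hm.le hmL (by linarith [hρ.2])
        gcongr
    _ = _ := by rw [one_mul]
end

section
/- Let H ∈ (1/2,1) and let λ_i := i²π² for integers i ≥ 1. There exists a constant C depending only on H such that for every ρ ∈ [0,H], all real numbers 0 ≤ s < t and every square-summable real sequence (x_i)_{i≥1}, one has ∑_{i=1}^{∞} λ_i^{2ρ} x_i² ∫ₛᵗ ∫ₛᵗ e^{−λ_i(t−u)} e^{−λ_i(t−v)} H(2H−1)|u−v|^{2H−2} du dv ≤ C (t−s)^{2(H−ρ)} ∑_{i=1}^{∞} x_i². -/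
/-!
With `T = t - s` and `m = min T (1/λ)`, the double integral attached to one eigenvalue `λ` is at
most a constant times `m ^ (2H)`. Indeed `∫ₛᵗ e^{-λ(t-u)} du ≤ m` (`integral_exp_le_min`), and
splitting the singular kernel at `|u - v| = m` gives
`∫ₛᵗ e^{-λ(t-u)} |u-v|^{2H-2} du ≤ (2/(2H-1) + 1) m^{2H-1}` uniformly in `v`
(`integral_exp_mul_kernel_le`): the near part is an explicit integral, the far part is at most
`m^{2H-2} · m`. Integrating once more against `e^{-λ(t-v)}` yields the power `m ^ (2H)`. Finally
`λ^{2ρ} m^{2H} = (λm)^{2ρ} m^{2(H-ρ)} ≤ T^{2(H-ρ)}` because `λm ≤ 1`, `m ≤ T` and `0 ≤ ρ ≤ H`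
(`rpow_mul_min_rpow_le`), so the estimate holds term by term with a constant free of `i` and `ρ`.
-/

open Real MeasureTheory

theorem integral_exp_le_min {l s t : ℝ} (hl : 0 < l) (hst : s < t) :
    ∫ u in s..t, Real.exp (-l * (t - u)) ≤ min (t - s) (1 / l) := by
  refine le_min ?_ ?_
  · calc ∫ u in s..t, Real.exp (-l * (t - u)) ≤ ∫ u in s..t, (1 : ℝ) := by
          refine intervalIntegral.integral_mono_on hst.le
            (Continuous.intervalIntegrable (by fun_prop) _ _) (by simp) ?_
          intro u hu
          rw [Real.exp_le_one_iff]
          nlinarith [hu.2]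
      _ = t - s := by simp
  · have h : ∀ u ∈ Set.uIcc s t, HasDerivAt (fun u => Real.exp (-l * (t - u)) / l)
        (Real.exp (-l * (t - u))) u := by
      intro u _
      have h1 : HasDerivAt (fun u : ℝ => -l * (t - u)) l u := by
        simpa using ((hasDerivAt_id u).const_sub t).const_mul (-l)
      have h2 := h1.exp.div_const l
      rwa [mul_div_assoc, div_self hl.ne', mul_one] at h2
    rw [intervalIntegral.integral_eq_sub_of_hasDerivAt h
      (Continuous.intervalIntegrable (by fun_prop) _ _)]
    have : 0 ≤ Real.exp (-l * (t - s)) / l := by positivity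
    simpa using this

/-- The singular kernel `|w| ^ p` cut off at distance `m` from the diagonal, that is, set to `0`
for `|w| ≥ m`. -/
noncomputable def nearKernel (p m w : ℝ) : ℝ := (Set.Iio m).indicator (fun r : ℝ => r ^ p) |w|

theorem nearKernel_nonneg (p m w : ℝ) : 0 ≤ nearKernel p m w := by
  unfold nearKernel
  exact Set.indicator_apply_nonneg fun _ => Real.rpow_nonneg (abs_nonneg w) p

theorem integral_nearKernel {p m : ℝ} (hp : -1 < p) (hm : 0 < m) :
    ∫ w, nearKernel p m w = 2 / (p + 1) * m ^ (p + 1) := by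
  unfold nearKernel
  rw [integral_comp_abs (f := (Set.Iio m).indicator (fun r : ℝ => r ^ p)),
    setIntegral_indicator measurableSet_Iio, Set.Ioi_inter_Iio, ← integral_Ioc_eq_integral_Ioo,
    ← intervalIntegral.integral_of_le hm.le, integral_rpow (Or.inl hp),
    Real.zero_rpow (by linarith)]
  ring

/-- Integrability follows from the nonzero value of the integral, since the Bochner integral of a
non-integrable function is `0`. -/
theorem integrable_nearKernel {p m : ℝ} (hp : -1 < p) (hm : 0 < m) :
    Integrable (nearKernel p m) := by
  have hp1 : 0 < p + 1 := by linarith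
  refine Integrable.of_integral_ne_zero ?_
  rw [integral_nearKernel hp hm]
  positivity

/-- Near the diagonal `|w| ^ p` equals `nearKernel p m w`; away from it, it is at most `m ^ p`,
since `p ≤ 0`. -/
theorem abs_rpow_le_nearKernel_or {p m : ℝ} (hp : p ≤ 0) (hm : 0 < m) (w : ℝ) :
    |w| ^ p ≤ nearKernel p m w ∨ |w| ^ p ≤ m ^ p := by
  by_cases h : |w| < m
  · left
    simp [nearKernel, h]
  · exact Or.inr (Real.rpow_le_rpow_of_nonpos hm (not_lt.1 h) hp)

theorem integral_exp_mul_kernel_le {p l s t : ℝ} (hp : -1 < p) (hp0 : p ≤ 0) (hl : 0 < l)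
    (hst : s < t) (v : ℝ) :
    ∫ u in s..t, Real.exp (-l * (t - u)) * |u - v| ^ p ≤
      (2 / (p + 1) + 1) * min (t - s) (1 / l) ^ (p + 1) := by
  set m := min (t - s) (1 / l) with hmdef
  have hm : 0 < m := lt_min (sub_pos.2 hst) (by positivity)
  have hi1 : Integrable (fun u => nearKernel p m (u - v)) :=
    (integrable_nearKernel hp hm).comp_sub_right v
  have hi2 : IntervalIntegrable (fun u => m ^ p * Real.exp (-l * (t - u))) volume s t :=
    Continuous.intervalIntegrable (by fun_prop) _ _
  have hnear : ∫ u in s..t, nearKernel p m (u - v) ≤ 2 / (p + 1) * m ^ (p + 1) := by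
    rw [intervalIntegral.integral_of_le hst.le, ← integral_nearKernel hp hm,
      ← integral_sub_right_eq_self (nearKernel p m) v]
    exact setIntegral_le_integral hi1 (Filter.Eventually.of_forall fun u => nearKernel_nonneg _ _ _)
  have hfar : ∫ u in s..t, m ^ p * Real.exp (-l * (t - u)) ≤ m ^ (p + 1) := by
    rw [intervalIntegral.integral_const_mul, Real.rpow_add_one hm.ne']
    exact mul_le_mul_of_nonneg_left (integral_exp_le_min hl hst) (by positivity)
  calc ∫ u in s..t, Real.exp (-l * (t - u)) * |u - v| ^ p
      ≤ ∫ u in s..t, (nearKernel p m (u - v) + m ^ p * Real.exp (-l * (t - u))) := by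
        rw [intervalIntegral.integral_of_le hst.le, intervalIntegral.integral_of_le hst.le]
        refine integral_mono_of_nonneg (Filter.Eventually.of_forall fun u => by positivity)
          (hi1.integrableOn.add hi2.1) ?_
        filter_upwards [ae_restrict_mem measurableSet_Ioc] with u hu
        have he : Real.exp (-l * (t - u)) ≤ 1 := by
          rw [Real.exp_le_one_iff]
          nlinarith [hu.2]
        have he0 := Real.exp_pos (-l * (t - u))
        have hk : 0 ≤ |u - v| ^ p := by positivity
        have hmp : 0 ≤ m ^ p := by positivity
        have hn := nearKernel_nonneg p m (u - v)
        show _ ≤ nearKernel p m (u - v) + m ^ p * Real.exp (-l * (t - u))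
        rcases abs_rpow_le_nearKernel_or hp0 hm (u - v) with h | h
        · nlinarith [mul_nonneg hmp he0.le]
        · nlinarith
    _ = (∫ u in s..t, nearKernel p m (u - v)) + ∫ u in s..t, m ^ p * Real.exp (-l * (t - u)) :=
        intervalIntegral.integral_add hi1.intervalIntegrable hi2
    _ ≤ _ := by linarith

theorem rpow_mul_min_rpow_le {H ρ l T : ℝ} (hρ : ρ ∈ Set.Icc 0 H) (hl : 0 < l) (hT : 0 < T) :
    l ^ (2 * ρ) * min T (1 / l) ^ (2 * H) ≤ T ^ (2 * (H - ρ)) := by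
  have hm : 0 < min T (1 / l) := lt_min hT (by positivity)
  have h1 : l * min T (1 / l) ≤ 1 := by
    calc l * min T (1 / l) ≤ l * (1 / l) := by gcongr; exact min_le_right _ _
      _ = 1 := by field_simp
  calc l ^ (2 * ρ) * min T (1 / l) ^ (2 * H)
      = (l * min T (1 / l)) ^ (2 * ρ) * min T (1 / l) ^ (2 * (H - ρ)) := by
        rw [Real.mul_rpow hl.le hm.le, mul_assoc, ← Real.rpow_add hm]
        ring_nf
    _ ≤ 1 * T ^ (2 * (H - ρ)) := by
        have := hρ.1
        have := hρ.2
        refine mul_le_mul (Real.rpow_le_one (by positivity) h1 (by linarith))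
          (Real.rpow_le_rpow hm.le (min_le_left _ _) (by linarith)) (by positivity) zero_le_one
    _ = _ := one_mul _

theorem double_integral_nonneg {H l s t : ℝ} (hH : H ∈ Set.Ioo (1 / 2 : ℝ) 1) (hst : s < t) :
    0 ≤ ∫ v in s..t, ∫ u in s..t, Real.exp (-l * (t - u)) * Real.exp (-l * (t - v)) *
      (H * (2 * H - 1) * |u - v| ^ (2 * H - 2)) := by
  have h1 := hH.1
  have hc : 0 ≤ H * (2 * H - 1) := mul_nonneg (by linarith) (by linarith)
  refine intervalIntegral.integral_nonneg hst.le fun v _ =>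
    intervalIntegral.integral_nonneg hst.le fun u _ => by positivity

theorem double_integral_le {H l s t : ℝ} (hH : H ∈ Set.Ioo (1 / 2 : ℝ) 1) (hl : 0 < l)
    (hst : s < t) :
    ∫ v in s..t, ∫ u in s..t, Real.exp (-l * (t - u)) * Real.exp (-l * (t - v)) *
      (H * (2 * H - 1) * |u - v| ^ (2 * H - 2)) ≤
      H * (2 * H - 1) * (2 / (2 * H - 1) + 1) * min (t - s) (1 / l) ^ (2 * H) := by
  have h1 := hH.1
  have h2 := hH.2
  have hc : 0 ≤ H * (2 * H - 1) := mul_nonneg (by linarith) (by linarith)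
  have ha : 0 < 2 * H - 1 := by linarith
  have hm : 0 < min (t - s) (1 / l) := lt_min (sub_pos.2 hst) (by positivity)
  set m := min (t - s) (1 / l) with hmdef
  set B := H * (2 * H - 1) * ((2 / (2 * H - 1) + 1) * m ^ (2 * H - 1)) with hB
  have hB0 : 0 ≤ B := by positivity
  have hinner : ∀ v, (∫ u in s..t, Real.exp (-l * (t - u)) * Real.exp (-l * (t - v)) *
      (H * (2 * H - 1) * |u - v| ^ (2 * H - 2))) ≤ B * Real.exp (-l * (t - v)) := by
    intro v
    have key := integral_exp_mul_kernel_le (p := 2 * H - 2) (by linarith) (by linarith) hl hst v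
    rw [← hmdef, show 2 * H - 2 + 1 = 2 * H - 1 by ring] at key
    calc _ = ∫ u in s..t, (Real.exp (-l * (t - v)) * (H * (2 * H - 1))) *
            (Real.exp (-l * (t - u)) * |u - v| ^ (2 * H - 2)) := by
          congr 1
          ext u
          ring
      _ = (Real.exp (-l * (t - v)) * (H * (2 * H - 1))) *
            ∫ u in s..t, Real.exp (-l * (t - u)) * |u - v| ^ (2 * H - 2) :=
          intervalIntegral.integral_const_mul _ _
      _ ≤ (Real.exp (-l * (t - v)) * (H * (2 * H - 1))) *
            ((2 / (2 * H - 1) + 1) * m ^ (2 * H - 1)) :=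
          mul_le_mul_of_nonneg_left key (by positivity)
      _ = _ := by rw [hB]; ring
  calc _ ≤ ∫ v in s..t, B * Real.exp (-l * (t - v)) := by
        rw [intervalIntegral.integral_of_le hst.le, intervalIntegral.integral_of_le hst.le]
        refine integral_mono_of_nonneg (Filter.Eventually.of_forall fun v =>
            intervalIntegral.integral_nonneg hst.le fun u _ => by positivity) ?_
          (Filter.Eventually.of_forall hinner)
        exact (Continuous.intervalIntegrable (by fun_prop) s t).1
    _ ≤ B * m := by
        rw [intervalIntegral.integral_const_mul]
        exact mul_le_mul_of_nonneg_left (integral_exp_le_min hl hst) hB0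
    _ = _ := by
        rw [hB, show 2 * H = 2 * H - 1 + 1 by ring, Real.rpow_add_one hm.ne']
        ring_nf

/-- Eigenbasis form of the smoothing estimate for the Dirichlet heat semigroup on `(0,1)`
with eigenvalues `λ_i = i²π²`: for `H ∈ (1/2,1)` there is `C = C(H)` such that for every
`ρ ∈ [0,H]`, `0 ≤ s < t` and every square-summable sequence `(x_i)`,
`∑ λ_i^(2ρ) x_i² ∫ₛᵗ∫ₛᵗ e^{-λ_i(t-u)} e^{-λ_i(t-v)} H(2H-1)|u-v|^(2H-2) du dv
  ≤ C (t-s)^(2(H-ρ)) ∑ x_i²`. -/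
theorem smoothing_estimate_eigen
    (H : ℝ) (hH : H ∈ Set.Ioo (1/2 : ℝ) 1) :
    ∃ C : ℝ, 0 < C ∧ ∀ (ρ s t : ℝ) (x : ℕ → ℝ), ρ ∈ Set.Icc 0 H → 0 ≤ s → s < t →
      Summable (fun i => (x i)^2) →
      (∑' i : ℕ, ((((i:ℝ)+1)^2 * Real.pi^2) ^ (2*ρ) * (x i)^2 *
        ∫ v in s..t, ∫ u in s..t,
          Real.exp (-(((i:ℝ)+1)^2 * Real.pi^2)*(t-u)) *
            Real.exp (-(((i:ℝ)+1)^2 * Real.pi^2)*(t-v)) *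
              (H * (2*H - 1) * |u - v| ^ (2*H - 2))))
      ≤ C * (t - s) ^ (2*(H - ρ)) * ∑' i : ℕ, (x i)^2 := by
  have h1 := hH.1
  have ha : 0 < 2 * H - 1 := by linarith
  have hH0 : 0 < H := by linarith
  set C := H * (2 * H - 1) * (2 / (2 * H - 1) + 1) with hC
  have hC0 : 0 < C := by positivity
  refine ⟨C, hC0, ?_⟩
  intro ρ s t x hρ _ hst hx
  have hterm : ∀ i : ℕ, ((((i:ℝ)+1)^2 * Real.pi^2) ^ (2*ρ) * (x i)^2 *
        ∫ v in s..t, ∫ u in s..t,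
          Real.exp (-(((i:ℝ)+1)^2 * Real.pi^2)*(t-u)) *
            Real.exp (-(((i:ℝ)+1)^2 * Real.pi^2)*(t-v)) *
              (H * (2*H - 1) * |u - v| ^ (2*H - 2)))
      ≤ C * (t - s) ^ (2*(H - ρ)) * (x i)^2 := by
    intro i
    have hl : 0 < ((i:ℝ)+1)^2 * Real.pi^2 := by positivity
    generalize ((i:ℝ)+1)^2 * Real.pi^2 = l at hl ⊢
    have hA := double_integral_le hH hl hst
    have hB := rpow_mul_min_rpow_le hρ hl (sub_pos.2 hst)
    calc _ ≤ l ^ (2*ρ) * (x i)^2 * (C * min (t - s) (1 / l) ^ (2 * H)) :=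
          mul_le_mul_of_nonneg_left hA (by positivity)
      _ = C * (l ^ (2 * ρ) * min (t - s) (1 / l) ^ (2 * H)) * (x i)^2 := by ring
      _ ≤ _ := by gcongr
  have hsum := hx.mul_left (C * (t - s) ^ (2*(H - ρ)))
  rw [← tsum_mul_left]
  refine Summable.tsum_le_tsum hterm (Summable.of_nonneg_of_le ?_ hterm hsum) hsum
  intro i
  exact mul_nonneg (by positivity) (double_integral_nonneg hH hst)
end

section
/- Let H ∈ (1/2,1), let T > 0, and let p > 1 satisfy (2−2H)p < 1, with q := p/(p−1) its conjugate exponent. Then there exists a constant C depending only on H, p and T such that for every λ > 0 and every t ∈ [0,T], ∫₀ᵗ ∫₀ᵗ e^{−λ(t−u)} e^{−λ(t−v)} |u−v|^{2H−2} du dv ≤ C λ^{−1−1/q}. -/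
/-!
For fixed `v`, Hölder's inequality in `u` on `(0, t]`, with `e^{-λ(t-u)}` in `L^q` and
`|u - v|^(2H-2)` in `L^p`, separates the inner integral into two factors. The first is
`(∫ e^{-qλ(t-u)} du)^(1/q) ≤ (1/λ)^(1/q)` since `q > 1` (`integral_exp_le`). The second is at most
`K^(1/p)` with `K = ∫_{-T}^{T} |w|^((2H-2)p) dw`, because translating by `v` carries `[0, t]` into
`[-T, T]` (`integral_abs_sub_rpow_le`); `K` is finite exactly because `(2-2H)p < 1`.
The remaining integral of `e^{-λ(t-v)}` in `v` contributes another factor `1/λ`.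
-/

open Real MeasureTheory

theorem intervalIntegrable_abs_rpow {r : ℝ} (hr : -1 < r) (a b : ℝ) :
    IntervalIntegrable (fun x : ℝ => |x| ^ r) volume a b := by
  have key : ∀ c : ℝ, 0 ≤ c → IntervalIntegrable (fun x : ℝ => |x| ^ r) volume 0 c := by
    intro c hc
    refine (intervalIntegral.intervalIntegrable_rpow' (a := 0) (b := c) hr).congr ?_
    intro x hx
    rw [Set.uIoc_of_le hc] at hx
    simp only [abs_of_pos hx.1]
  have all : ∀ c : ℝ, IntervalIntegrable (fun x : ℝ => |x| ^ r) volume 0 c := by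
    intro c
    rcases le_total 0 c with hc | hc
    · exact key c hc
    · have h := (key (-c) (by linarith)).comp_sub_left 0
      simpa using h
  exact (all a).symm.trans (all b)

theorem intervalIntegrable_abs_sub_rpow {r : ℝ} (hr : -1 < r) (a b v : ℝ) :
    IntervalIntegrable (fun x : ℝ => |x - v| ^ r) volume a b := by
  have h := (intervalIntegrable_abs_rpow hr (a - v) (b - v)).comp_sub_right v
  simpa using h

theorem integral_abs_sub_rpow_le {r T t v : ℝ} (hr : -1 < r) (hv0 : 0 ≤ v) (hvt : v ≤ t)
    (htT : t ≤ T) :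
    ∫ u in (0:ℝ)..t, |u - v| ^ r ≤ ∫ w in (-T)..T, |w| ^ r := by
  rw [intervalIntegral.integral_comp_sub_right (fun w : ℝ => |w| ^ r) v]
  refine intervalIntegral.integral_mono_interval (by linarith) (by linarith) (by linarith) ?_
    (intervalIntegrable_abs_rpow hr _ _)
  exact Filter.Eventually.of_forall fun w => by positivity

theorem integral_exp_le_s3 {m : ℝ} (hm : 0 < m) (t : ℝ) :
    ∫ u in (0:ℝ)..t, Real.exp (-m * (t - u)) ≤ 1 / m := by
  have hd : ∀ u ∈ Set.uIcc 0 t, HasDerivAt (fun u : ℝ => Real.exp (-m * (t - u)) / m)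
      (Real.exp (-m * (t - u))) u := by
    intro u _
    have h := ((((hasDerivAt_id u).const_sub t).const_mul (-m)).exp).div_const m
    have hval : Real.exp (-m * (t - u)) * (-m * -1) / m = Real.exp (-m * (t - u)) := by
      field_simp
    exact hval ▸ h
  rw [intervalIntegral.integral_eq_sub_of_hasDerivAt hd
    (Continuous.intervalIntegrable (by fun_prop) _ _)]
  have h0 : 0 ≤ Real.exp (-m * (t - 0)) / m := by positivity
  simp only [sub_self, mul_zero, Real.exp_zero]
  linarith

/-- Hölder's inequality for the inner integral, without the factor `e^{-λ(t-v)}` that is constant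
in `u`. -/
theorem integral_exp_mul_abs_sub_rpow_le {p q s T lam t v : ℝ} (hpq : p.HolderConjugate q)
    (hs : -1 < s * p) (hlam : 0 < lam) (hv0 : 0 ≤ v) (hvt : v ≤ t) (htT : t ≤ T) :
    ∫ u in (0:ℝ)..t, Real.exp (-lam * (t - u)) * |u - v| ^ s
      ≤ (1 / lam) ^ (1 / q) * (∫ w in (-T)..T, |w| ^ (s * p)) ^ (1 / p) := by
  have ht : 0 ≤ t := hv0.trans hvt
  have hp0 : 0 < p := hpq.pos
  have hq0 : 0 < q := hpq.symm.pos
  have epow : ∀ u : ℝ, Real.exp (-lam * (t - u)) ^ q = Real.exp (-(q * lam) * (t - u)) := by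
    intro u
    rw [← Real.exp_mul]
    congr 1
    ring
  have kpow : ∀ u : ℝ, (|u - v| ^ s) ^ p = |u - v| ^ (s * p) := fun u =>
    (Real.rpow_mul (abs_nonneg _) _ _).symm
  have memE : MemLp (fun u : ℝ => Real.exp (-lam * (t - u))) (ENNReal.ofReal q)
      (volume.restrict (Set.Ioc 0 t)) := by
    rw [← integrable_norm_rpow_iff (by fun_prop) (by simpa using hq0) ENNReal.ofReal_ne_top,
      ENNReal.toReal_ofReal hq0.le]
    simp only [Real.norm_eq_abs, Real.abs_exp, epow]
    exact (intervalIntegrable_iff_integrableOn_Ioc_of_le ht).mp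
      (Continuous.intervalIntegrable (by fun_prop) _ _)
  have memK : MemLp (fun u : ℝ => |u - v| ^ s) (ENNReal.ofReal p)
      (volume.restrict (Set.Ioc 0 t)) := by
    have hmeas : Measurable (fun u : ℝ => |u - v| ^ s) := by fun_prop
    rw [← integrable_norm_rpow_iff hmeas.aestronglyMeasurable (by simpa using hp0)
      ENNReal.ofReal_ne_top, ENNReal.toReal_ofReal hp0.le]
    have habs : ∀ u : ℝ, ‖|u - v| ^ s‖ = |u - v| ^ s := fun u =>
      Real.norm_of_nonneg (by positivity)
    simp only [habs, kpow]
    exact (intervalIntegrable_iff_integrableOn_Ioc_of_le ht).mp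
      (intervalIntegrable_abs_sub_rpow hs _ _ _)
  have holder := integral_mul_le_Lp_mul_Lq_of_nonneg hpq.symm
    (Filter.Eventually.of_forall fun u => (Real.exp_pos (-lam * (t - u))).le)
    (Filter.Eventually.of_forall fun u => (by positivity : 0 ≤ |u - v| ^ s)) memE memK
  simp only [epow, kpow, ← intervalIntegral.integral_of_le ht] at holder
  refine holder.trans ?_
  have hE0 : 0 ≤ ∫ u in (0:ℝ)..t, Real.exp (-(q * lam) * (t - u)) :=
    intervalIntegral.integral_nonneg ht fun u _ => (Real.exp_pos _).le
  have hK0 : 0 ≤ ∫ u in (0:ℝ)..t, |u - v| ^ (s * p) :=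
    intervalIntegral.integral_nonneg ht fun u _ => by positivity
  have hE : ∫ u in (0:ℝ)..t, Real.exp (-(q * lam) * (t - u)) ≤ 1 / lam := by
    refine (integral_exp_le_s3 (by positivity) t).trans ?_
    apply one_div_le_one_div_of_le hlam
    nlinarith [hpq.symm.lt]
  exact mul_le_mul (Real.rpow_le_rpow hE0 hE (by positivity))
    (Real.rpow_le_rpow hK0 (integral_abs_sub_rpow_le hs hv0 hvt htT) (by positivity))
    (by positivity) (by positivity)

/-- Hölder estimate for the doubly-exponentially weighted fractional kernel:
for `H ∈ (1/2,1)`, `T > 0`, `p > 1` with `(2-2H)p < 1` and conjugate exponent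
`q = p/(p-1)`, there is `C = C(H,p,T)` with
`∫₀ᵗ∫₀ᵗ e^{-λ(t-u)} e^{-λ(t-v)} |u-v|^(2H-2) du dv ≤ C λ^(-1-1/q)` for all `λ > 0`,
`t ∈ [0,T]`. -/
theorem holder_exponential_kernel_estimate
    (H T p : ℝ) (hH : H ∈ Set.Ioo (1/2 : ℝ) 1) (hT : 0 < T) (hp : 1 < p)
    (hpH : (2 - 2*H) * p < 1) :
    ∃ C : ℝ, 0 < C ∧ ∀ lam t : ℝ, 0 < lam → t ∈ Set.Icc 0 T →
      (∫ v in (0:ℝ)..t, ∫ u in (0:ℝ)..t,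
        Real.exp (-lam*(t-u)) * Real.exp (-lam*(t-v)) * |u - v| ^ (2*H - 2))
      ≤ C * lam ^ (-1 - 1/(p/(p-1))) := by
  have hpq : p.HolderConjugate (p / (p - 1)) := Real.HolderConjugate.conjExponent hp
  set q := p / (p - 1)
  have hs : -1 < (2 * H - 2) * p := by linarith
  set K := ∫ w in (-T)..T, |w| ^ ((2 * H - 2) * p)
  have hK : 0 ≤ K := intervalIntegral.integral_nonneg (by linarith) fun w _ => by positivity
  -- Adding `1` makes the constant positive without computing `K`.
  refine ⟨K ^ (1 / p) + 1, by positivity, ?_⟩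
  rintro lam t hlam ⟨ht, htT⟩
  set M := (1 / lam) ^ (1 / q) * K ^ (1 / p)
  have hM : 0 ≤ M := by positivity
  calc (∫ v in (0:ℝ)..t, ∫ u in (0:ℝ)..t,
        Real.exp (-lam*(t-u)) * Real.exp (-lam*(t-v)) * |u - v| ^ (2*H - 2))
      ≤ ∫ v in (0:ℝ)..t, Real.exp (-lam * (t - v)) * M := by
        rw [intervalIntegral.integral_of_le ht, intervalIntegral.integral_of_le ht]
        -- This form of monotonicity needs no measurability of the inner integral in `v`.
        refine integral_mono_of_nonneg ?_ ?_ ?_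
        · exact Filter.Eventually.of_forall fun v =>
            intervalIntegral.integral_nonneg ht fun u _ => by positivity
        · exact (intervalIntegrable_iff_integrableOn_Ioc_of_le ht).mp
            (Continuous.intervalIntegrable (by fun_prop) _ _)
        · filter_upwards [ae_restrict_mem measurableSet_Ioc] with v hv
          have hfac : ∀ u : ℝ,
              Real.exp (-lam*(t-u)) * Real.exp (-lam*(t-v)) * |u - v| ^ (2*H - 2)
                = Real.exp (-lam*(t-v)) * (Real.exp (-lam*(t-u)) * |u - v| ^ (2*H - 2)) :=
            fun u => by ring
          simp only [hfac, intervalIntegral.integral_const_mul]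
          exact mul_le_mul_of_nonneg_left
            (integral_exp_mul_abs_sub_rpow_le hpq hs hlam hv.1.le hv.2 htT) (Real.exp_pos _).le
    _ ≤ 1 / lam * M := by
        rw [intervalIntegral.integral_mul_const]
        exact mul_le_mul_of_nonneg_right (integral_exp_le_s3 hlam t) hM
    _ = K ^ (1 / p) * lam ^ (-1 - 1 / q) := by
        rw [Real.rpow_sub hlam, Real.rpow_neg_one]
        simp only [M]
        rw [Real.div_rpow zero_le_one hlam.le, Real.one_rpow]
        ring
    _ ≤ (K ^ (1 / p) + 1) * lam ^ (-1 - 1 / q) := by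
        gcongr
        linarith
end

section
/- Let H ∈ (1/2,1), let T > 0, and let p > 1 satisfy (2−2H)p < 1, with q := p/(p−1) its conjugate exponent. Then there exists a constant C depending only on H, p and T such that for every λ > 0 and all 0 ≤ s < t ≤ T, ∫ₛᵗ ∫ₛᵗ e^{−λ(t−u)} e^{−λ(t−v)} |u−v|^{2H−2} du dv ≤ C (t−s) λ^{−1/q}. -/
/-!
Since `exp (-λ(t-v)) ≤ 1`, it suffices to bound the inner integral by `C λ^(-1/q)` uniformly in `v`.
The Hölder step is carried out pointwise, as Young's inequality applied to the factors
`λ^(1/q) exp (-λ(t-u))` and `|u-v|^(2H-2)`: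
`exp (-λ(t-u)) |u-v|^(2H-2) ≤ λ^(-1/q) (λ exp (-λ(t-u)) / q + |u-v|^((2H-2)p) / p)`,
where `exp (-λ(t-u))^q ≤ exp (-λ(t-u))` because `q ≥ 1`. The first summand integrates to at most
`1/q`, and the second one is integrable, with a bound depending on `H`, `p`, `T` only, because
`(2H-2)p > -1` (`integral_abs_sub_rpow_le`).
-/

open Real MeasureTheory

lemma intervalIntegrable_abs_sub_rpow_left {a s v : ℝ} (ha : -1 < a) (hsv : s ≤ v) :
    IntervalIntegrable (fun u => |u - v| ^ a) volume s v := by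
  have h := ((intervalIntegral.intervalIntegrable_rpow' (a := v - s) (b := v - v) ha).comp_sub_left
    v)
  simp only [sub_sub_cancel] at h
  refine IntervalIntegrable.congr (fun u hu => ?_) h
  rw [Set.uIoc_of_le hsv] at hu
  simp only [abs_sub_comm u v, abs_of_nonneg (sub_nonneg.2 hu.2)]

lemma intervalIntegrable_abs_sub_rpow_right {a v t : ℝ} (ha : -1 < a) (hvt : v ≤ t) :
    IntervalIntegrable (fun u => |u - v| ^ a) volume v t := by
  have h := ((intervalIntegral.intervalIntegrable_rpow' (a := v - v) (b := t - v) ha).comp_sub_right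
    v)
  simp only [sub_add_cancel] at h
  refine IntervalIntegrable.congr (fun u hu => ?_) h
  rw [Set.uIoc_of_le hvt] at hu
  simp only [abs_of_nonneg (sub_nonneg.2 hu.1.le)]

lemma integral_abs_sub_rpow_le_s4 {a s v t T : ℝ} (ha : -1 < a) (hs : 0 ≤ s) (hsv : s ≤ v)
    (hvt : v ≤ t) (htT : t ≤ T) :
    ∫ u in s..t, |u - v| ^ a ≤ 2 * (T ^ (a + 1) / (a + 1)) := by
  have ha1 : 0 < a + 1 := by linarith
  rw [← intervalIntegral.integral_add_adjacent_intervals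
    (intervalIntegrable_abs_sub_rpow_left ha hsv) (intervalIntegrable_abs_sub_rpow_right ha hvt)]
  have h1 : ∫ u in s..v, |u - v| ^ a = (v - s) ^ (a + 1) / (a + 1) := by
    have : ∫ u in s..v, |u - v| ^ a = ∫ u in s..v, (v - u) ^ a := by
      refine intervalIntegral.integral_congr fun u hu => ?_
      rw [Set.uIcc_of_le hsv] at hu
      simp only [abs_sub_comm u v, abs_of_nonneg (sub_nonneg.2 hu.2)]
    rw [this, intervalIntegral.integral_comp_sub_left (fun x => x ^ a) v, sub_self,
      integral_rpow (Or.inl ha), Real.zero_rpow ha1.ne', sub_zero]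
  have h2 : ∫ u in v..t, |u - v| ^ a = (t - v) ^ (a + 1) / (a + 1) := by
    have : ∫ u in v..t, |u - v| ^ a = ∫ u in v..t, (u - v) ^ a := by
      refine intervalIntegral.integral_congr fun u hu => ?_
      rw [Set.uIcc_of_le hvt] at hu
      simp only [abs_of_nonneg (sub_nonneg.2 hu.1)]
    rw [this, intervalIntegral.integral_comp_sub_right (fun x => x ^ a) v, sub_self,
      integral_rpow (Or.inl ha), Real.zero_rpow ha1.ne', sub_zero]
  rw [h1, h2, two_mul]
  gcongr <;> linarith

lemma integral_mul_exp_le_one (lam s t : ℝ) :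
    ∫ u in s..t, lam * Real.exp (-lam * (t - u)) ≤ 1 := by
  have h : ∀ u ∈ Set.uIcc s t, HasDerivAt (fun u => Real.exp (-lam * (t - u)))
      (lam * Real.exp (-lam * (t - u))) u := by
    intro u _
    have := (((hasDerivAt_id u).const_sub t).const_mul (-lam)).exp
    simp only [id] at this
    convert this using 1
    ring
  rw [intervalIntegral.integral_eq_sub_of_hasDerivAt h
    (Continuous.intervalIntegrable (by fun_prop) _ _)]
  simp [Real.exp_nonneg]

/-- Young's inequality for `(lam ^ (1/q) * e) * b`, using `e ^ q ≤ e` for `e ∈ [0,1]`. -/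
lemma mul_le_weighted_young {p q lam e b : ℝ} (hpq : p.HolderConjugate q) (hlam : 0 < lam)
    (he : 0 ≤ e) (he1 : e ≤ 1) (hb : 0 ≤ b) :
    e * b ≤ lam ^ (-(1/q)) * (lam * e / q + b ^ p / p) := by
  have hq := hpq.symm.pos
  have hY := Real.young_inequality_of_nonneg
    (mul_nonneg (Real.rpow_nonneg hlam.le (1/q)) he) hb hpq.symm
  rw [Real.mul_rpow (Real.rpow_nonneg hlam.le _) he, ← Real.rpow_mul hlam.le,
    one_div_mul_cancel hq.ne', Real.rpow_one] at hY
  have heq : e ^ q ≤ e := by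
    simpa using Real.rpow_le_rpow_of_exponent_ge' he he1 zero_le_one hpq.symm.lt.le
  have hcancel : lam ^ (-(1/q)) * lam ^ (1/q) = 1 := by
    rw [← Real.rpow_add hlam, neg_add_cancel, Real.rpow_zero]
  calc e * b = lam ^ (-(1/q)) * (lam ^ (1/q) * e * b) := by
        rw [← mul_assoc, ← mul_assoc, hcancel, one_mul]
    _ ≤ lam ^ (-(1/q)) * (lam * e ^ q / q + b ^ p / p) := by gcongr
    _ ≤ _ := by gcongr

/-- Hölder estimate on a subinterval: for `H ∈ (1/2,1)`, `T > 0`, `p > 1` with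
`(2-2H)p < 1` and conjugate exponent `q = p/(p-1)`, there is `C = C(H,p,T)` with
`∫ₛᵗ∫ₛᵗ e^{-λ(t-u)} e^{-λ(t-v)} |u-v|^(2H-2) du dv ≤ C (t-s) λ^(-1/q)` for all `λ > 0`
and `0 ≤ s < t ≤ T`. -/
theorem holder_exponential_kernel_estimate_subinterval
    (H T p : ℝ) (hH : H ∈ Set.Ioo (1/2 : ℝ) 1) (hT : 0 < T) (hp : 1 < p)
    (hpH : (2 - 2*H) * p < 1) :
    ∃ C : ℝ, 0 < C ∧ ∀ lam s t : ℝ, 0 < lam → 0 ≤ s → s < t → t ≤ T →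
      (∫ v in s..t, ∫ u in s..t,
        Real.exp (-lam*(t-u)) * Real.exp (-lam*(t-v)) * |u - v| ^ (2*H - 2))
      ≤ C * (t - s) * lam ^ (-(1/(p/(p-1)))) := by
  have hpq : p.HolderConjugate (p/(p-1)) := Real.HolderConjugate.conjExponent hp
  set q := p/(p-1)
  have hq := hpq.symm.pos
  have hp0 := hpq.pos
  set a := (2*H - 2) * p with ha_def
  have ha : -1 < a := by rw [ha_def]; linarith
  have ha1 : 0 < a + 1 := by linarith
  refine ⟨1 / q + 2 * (T ^ (a + 1) / (a + 1)) / p, by positivity, ?_⟩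
  intro lam s t hlam hs hst htT
  set C := 1 / q + 2 * (T ^ (a + 1) / (a + 1)) / p
  have key : ∀ v ∈ Set.uIoc s t, ‖∫ u in s..t,
      Real.exp (-lam*(t-u)) * Real.exp (-lam*(t-v)) * |u - v| ^ (2*H - 2)‖
      ≤ C * lam ^ (-(1/q)) := by
    intro v hv
    rw [Set.uIoc_of_le hst.le] at hv
    have hexp : ∀ u, u ≤ t → Real.exp (-lam*(t-u)) ≤ 1 := fun u hu => by
      rw [Real.exp_le_one_iff]
      nlinarith
    have hi1 : IntervalIntegrable (fun u => lam * Real.exp (-lam * (t - u)) / q) volume s t :=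
      Continuous.intervalIntegrable (by fun_prop) _ _
    have hi2 : IntervalIntegrable (fun u => |u - v| ^ a / p) volume s t :=
      ((intervalIntegrable_abs_sub_rpow_left ha hv.1.le).trans
        (intervalIntegrable_abs_sub_rpow_right ha hv.2)).div_const p
    refine (intervalIntegral.norm_integral_le_of_norm_le hst.le
      (g := fun u => lam ^ (-(1/q)) * (lam * Real.exp (-lam * (t - u)) / q + |u - v| ^ a / p))
      (Filter.Eventually.of_forall fun u hu => ?_) ((hi1.add hi2).const_mul _)).trans ?_
    · have hb : 0 ≤ |u - v| ^ (2*H - 2) := Real.rpow_nonneg (abs_nonneg _) _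
      have hY := mul_le_weighted_young hpq hlam (Real.exp_nonneg _) (hexp u hu.2) hb
      rw [← Real.rpow_mul (abs_nonneg _)] at hY
      rw [Real.norm_of_nonneg (by positivity)]
      refine le_trans ?_ hY
      gcongr
      exact mul_le_of_le_one_right (Real.exp_nonneg _) (hexp v hv.2)
    · rw [intervalIntegral.integral_const_mul, intervalIntegral.integral_add hi1 hi2,
        intervalIntegral.integral_div, intervalIntegral.integral_div, mul_comm]
      gcongr
      · exact add_le_add (by gcongr; exact integral_mul_exp_le_one lam s t)
          (by gcongr; exact integral_abs_sub_rpow_le_s4 ha hs hv.1.le hv.2 htT)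
  have h := (le_abs_self _).trans (intervalIntegral.norm_integral_le_of_norm_le_const key)
  rw [abs_of_pos (sub_pos.2 hst)] at h
  linarith
end

section
/- For every λ > 0, every step size h > 0 and every natural number n, writing ⌊s⌋_h := h·⌊s/h⌋, one has 0 ≤ ∫₀^{nh} ( e^{−λ(nh−s)} − e^{−λ(nh−⌊s⌋_h)} ) ds ≤ h. -/
/-!
The kernel `g s = exp (-λ (nh - s))` is nondecreasing. Since `⌊s⌋_h ≤ s`, the integrand
`g s - g ⌊s⌋_h` is nonnegative; on the cell `[kh, (k+1)h]` it is at most `g ((k+1)h) - g (kh)`,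
so its integral over the cell is at most `h (g ((k+1)h) - g (kh))`. Summing over the cells
telescopes to `h (g (nh) - g 0) ≤ h g (nh) = h` (`integral_sub_grid_le`).
-/

open Real MeasureTheory

lemma monotone_grid {h : ℝ} (hh : 0 < h) : Monotone fun s : ℝ => h * (⌊s / h⌋ : ℝ) := by
  intro a b hab
  have : ⌊a / h⌋ ≤ ⌊b / h⌋ := Int.floor_mono (by gcongr)
  have : (⌊a / h⌋ : ℝ) ≤ ⌊b / h⌋ := by exact_mod_cast this
  exact mul_le_mul_of_nonneg_left this hh.le

lemma grid_le {h : ℝ} (hh : 0 < h) (s : ℝ) : h * (⌊s / h⌋ : ℝ) ≤ s := by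
  have := Int.floor_le (s / h)
  rw [le_div_iff₀ hh] at this
  linarith

lemma intervalIntegrable_sub_grid {g : ℝ → ℝ} (hg : Monotone g) {h : ℝ} (hh : 0 < h) (a b : ℝ) :
    IntervalIntegrable (fun s => g s - g (h * (⌊s / h⌋ : ℝ))) volume a b :=
  hg.intervalIntegrable.sub (hg.comp (monotone_grid hh)).intervalIntegrable

/-- The error of the left-endpoint rule for a monotone function is bounded by the mesh times the
total increment, by telescoping over the cells. -/
lemma integral_sub_grid_le {g : ℝ → ℝ} (hg : Monotone g) {h : ℝ} (hh : 0 < h) (n : ℕ) :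
    ∫ s in (0:ℝ)..(n * h), (g s - g (h * (⌊s / h⌋ : ℝ))) ≤ h * (g (n * h) - g 0) := by
  induction n with
  | zero => simp
  | succ k ih =>
    have hle : (k : ℝ) * h ≤ ((k + 1 : ℕ) : ℝ) * h := by push_cast; nlinarith
    have hcell : ∫ s in (k * h : ℝ)..((k + 1 : ℕ) * h), (g s - g (h * (⌊s / h⌋ : ℝ)))
        ≤ h * (g ((k + 1 : ℕ) * h) - g (k * h)) := by
      calc _ ≤ ∫ _ in (k * h : ℝ)..((k + 1 : ℕ) * h), (g ((k + 1 : ℕ) * h) - g (k * h)) := by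
            refine intervalIntegral.integral_mono_on hle (intervalIntegrable_sub_grid hg hh _ _)
              intervalIntegrable_const fun s hs => sub_le_sub (hg hs.2) (hg ?_)
            have hk := monotone_grid hh hs.1
            simp only [mul_div_cancel_right₀ _ hh.ne', Int.floor_natCast, Int.cast_natCast] at hk
            linarith
        _ = _ := by
            rw [intervalIntegral.integral_const, smul_eq_mul]
            push_cast
            ring
    rw [← intervalIntegral.integral_add_adjacent_intervals
      (intervalIntegrable_sub_grid hg hh 0 (k * h)) (intervalIntegrable_sub_grid hg hh _ _)]
    linarith

/-- Time-discretization error of the scalar exponential kernel on a uniform grid: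
for `λ > 0`, step size `h > 0` and `n ∈ ℕ`, with `⌊s⌋_h := h⌊s/h⌋`,
`0 ≤ ∫₀^{nh} (e^{-λ(nh-s)} - e^{-λ(nh-⌊s⌋_h)}) ds ≤ h`. -/
theorem exp_kernel_grid_error
    (lam h : ℝ) (hlam : 0 < lam) (hh : 0 < h) (n : ℕ) :
    0 ≤ (∫ s in (0:ℝ)..(n*h),
          (Real.exp (-lam*(n*h - s)) - Real.exp (-lam*(n*h - h*(⌊s/h⌋ : ℝ))))) ∧
    (∫ s in (0:ℝ)..(n*h),
          (Real.exp (-lam*(n*h - s)) - Real.exp (-lam*(n*h - h*(⌊s/h⌋ : ℝ))))) ≤ h := by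
  have hg : Monotone fun s : ℝ => Real.exp (-lam * (n * h - s)) := fun a b hab =>
    Real.exp_le_exp.2 (by nlinarith)
  constructor
  · exact intervalIntegral.integral_nonneg (by positivity) fun s _ =>
      sub_nonneg.2 (hg (grid_le hh s))
  · refine (integral_sub_grid_le hg hh n).trans ?_
    have := Real.exp_pos (-lam * (n * h - 0))
    simp only [sub_self, mul_zero, Real.exp_zero]
    nlinarith
end

section
/- Let λ_i := i²π² for integers i ≥ 1. For every step size h > 0, every natural number n, and every square-summable real sequence (x_i)_{i≥1}, writing ⌊s⌋_h := h·⌊s/h⌋, one has ∑_{i=1}^{∞} x_i² ( ∫₀^{nh} ( e^{−λ_i(nh−s)} − e^{−λ_i(nh−⌊s⌋_h)} ) ds )² ≤ h² ∑_{i=1}^{∞} x_i². -/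
open Real MeasureTheory

/-!
For each mode `f s = exp (-λ (nh - s))` is increasing, nonnegative and bounded by `1` on
`(-∞, nh]`. Since `s - h ≤ h⌊s/h⌋ ≤ s`, the integrand lies between `0` and `f s - f (s - h)`, and
the integral of the latter over `[0, nh]` telescopes to
`∫ s in nh - h..nh, f s - ∫ s in -h..0, f s ≤ h`. This is the content of
`integral_sub_floor_mem_Icc`. The bound is uniform in `λ`, so squaring, weighting by `x_i²`
and summing gives the theorem.
-/

/-- The left-endpoint quadrature error of a nonnegative increasing function bounded by `1` is at
most one step size. -/
lemma integral_sub_floor_mem_Icc {f : ℝ → ℝ} (hf : Monotone f) (hf0 : ∀ s, 0 ≤ f s)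
    {h b : ℝ} (hh : 0 < h) (hb : 0 ≤ b) (hfb : f b ≤ 1) :
    (∫ s in (0:ℝ)..b, (f s - f (h * (⌊s / h⌋ : ℝ)))) ∈ Set.Icc 0 h := by
  have hfi : ∀ a c : ℝ, IntervalIntegrable f volume a c := fun a c =>
    hf.intervalIntegrable
  have hfloor : Monotone fun s : ℝ => f (h * (⌊s / h⌋ : ℝ)) := by
    intro s t hst
    apply hf
    have : ⌊s / h⌋ ≤ ⌊t / h⌋ := Int.floor_le_floor (by gcongr)
    have : (⌊s / h⌋ : ℝ) ≤ ⌊t / h⌋ := by exact_mod_cast this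
    gcongr
  have hshift : Monotone fun s : ℝ => f (s - h) := fun s t hst => hf (by linarith)
  have hle : ∀ s : ℝ, h * (⌊s / h⌋ : ℝ) ≤ s := fun s => by
    have := Int.floor_le (s / h)
    rw [le_div_iff₀ hh] at this
    linarith
  have hge : ∀ s : ℝ, s - h ≤ h * (⌊s / h⌋ : ℝ) := fun s => by
    have := Int.lt_floor_add_one (s / h)
    rw [div_lt_iff₀ hh] at this
    linarith
  refine ⟨intervalIntegral.integral_nonneg hb fun s _ => sub_nonneg.2 (hf (hle s)), ?_⟩
  calc (∫ s in (0:ℝ)..b, (f s - f (h * (⌊s / h⌋ : ℝ))))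
      ≤ ∫ s in (0:ℝ)..b, (f s - f (s - h)) :=
        intervalIntegral.integral_mono_on hb ((hfi _ _).sub hfloor.intervalIntegrable)
          ((hfi _ _).sub hshift.intervalIntegrable)
          fun s _ => sub_le_sub_left (hf (hge s)) _
    _ = (∫ s in (b - h)..b, f s) - ∫ s in (0 - h)..0, f s := by
        rw [intervalIntegral.integral_sub (hfi _ _) hshift.intervalIntegrable,
          intervalIntegral.integral_comp_sub_right (fun s => f s) h,
          intervalIntegral.integral_interval_sub_interval_comm (hfi _ _) (hfi _ _) (hfi _ _),
          intervalIntegral.integral_symm (0 - h) 0, intervalIntegral.integral_symm (b - h) b]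
        ring
    _ ≤ (∫ _ in (b - h)..b, (1 : ℝ)) - 0 := by
        gcongr
        · exact intervalIntegral.integral_mono_on (by linarith) (hfi _ _) (by simp)
            fun s hs => (hf hs.2).trans hfb
        · exact intervalIntegral.integral_nonneg (by linarith) fun s _ => hf0 s
    _ = h := by simp

/-- Summed time-discretization error of the heat semigroup with eigenvalues `λ_i = i²π²`:
for a step size `h > 0`, `n ∈ ℕ` and a square-summable sequence `(x_i)`, with
`⌊s⌋_h := h⌊s/h⌋`,
`∑ᵢ x_i² (∫₀^{nh} (e^{-λ_i(nh-s)} - e^{-λ_i(nh-⌊s⌋_h)}) ds)² ≤ h² ∑ᵢ x_i²`. -/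
theorem heat_semigroup_grid_error_summed
    (h : ℝ) (hh : 0 < h) (n : ℕ) (x : ℕ → ℝ) (hx : Summable (fun i => (x i)^2)) :
    (∑' i : ℕ, (x i)^2 *
      (∫ s in (0:ℝ)..(n*h),
        (Real.exp (-(((i:ℝ)+1)^2 * Real.pi^2)*(n*h - s)) -
          Real.exp (-(((i:ℝ)+1)^2 * Real.pi^2)*(n*h - h*(⌊s/h⌋ : ℝ)))))^2)
    ≤ h^2 * ∑' i : ℕ, (x i)^2 := by
  have key : ∀ i : ℕ, (x i)^2 *
      (∫ s in (0:ℝ)..(n*h),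
        (Real.exp (-(((i:ℝ)+1)^2 * Real.pi^2)*(n*h - s)) -
          Real.exp (-(((i:ℝ)+1)^2 * Real.pi^2)*(n*h - h*(⌊s/h⌋ : ℝ)))))^2
      ≤ h^2 * (x i)^2 := fun i => by
    have hmono : Monotone fun s : ℝ =>
        Real.exp (-(((i:ℝ)+1)^2 * Real.pi^2)*(n*h - s)) := fun s t hst => by
      have : 0 ≤ ((i:ℝ)+1)^2 * Real.pi^2 := by positivity
      exact Real.exp_le_exp.2 (by nlinarith)
    obtain ⟨h0, h1⟩ := integral_sub_floor_mem_Icc hmono (fun s => (Real.exp_pos _).le) hh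
      (b := n*h) (by positivity) (by simp)
    rw [mul_comm]
    gcongr
  have hs : Summable fun i => h^2 * (x i)^2 := hx.mul_left _
  rw [← tsum_mul_left]
  exact (Summable.of_nonneg_of_le (fun i => by positivity) key hs).tsum_le_tsum key hs
end

section
/- Let H ∈ (1/2,1) and T > 0. There exists a constant C depending only on H and T such that for every λ > 0, every step size h > 0 and every natural number n with nh ≤ T, writing ⌊s⌋_h := h·⌊s/h⌋, one has ∫₀^{nh} ∫₀^{nh} ∫_{⌊s₁⌋_h}^{s₁} ∫_{⌊s₂⌋_h}^{s₂} e^{−λ(nh−s₁)} e^{−λ(nh−s₂)} |σ₁−σ₂|^{2H−2} dσ₂ dσ₁ ds₂ ds₁ ≤ C h² λ^{−1}. -/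
open Real MeasureTheory

/-!
The triangle inequality in `ℝ≥0∞` (`‖∫ g‖ₑ ≤ ∫⁻ ‖g‖ₑ`, valid without measurability or
integrability) bounds the quadruple integral by an iterated Lebesgue integral of a nonnegative
function. There the second exponential is at most `1`, each window `(⌊s⌋_h, s]` is contained in
`(s - h, s]`, and since all variables lie in `(0, nh] ⊆ (0, T]` the kernel may be replaced by the
truncation `1_{|u| ≤ T} |u| ^ (2H-2)`, whose integral `K` over `ℝ` is finite because `2H-2 > -1`.
Integrating `s₂` first (Tonelli) and over all of `ℝ`, translation invariance turns the three inner
integrals into `h * h * K` (`lintegral_window`); the remaining integral of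
`exp (-λ (nh - s₁))` over `(0, nh]` is at most `λ⁻¹`.
-/

open scoped ENNReal

/-- The kernel `|u| ^ a` truncated to `[-T, T]`, with values in `ℝ≥0∞`. -/
noncomputable def truncKernel (T a : ℝ) : ℝ → ℝ≥0∞ :=
  (Set.Icc (-T) T).indicator fun u => ENNReal.ofReal (|u| ^ a)

lemma measurable_truncKernel (T a : ℝ) : Measurable (truncKernel T a) := by
  unfold truncKernel
  refine Measurable.indicator ?_ measurableSet_Icc
  fun_prop

lemma lintegral_truncKernel_lt_top (T a : ℝ) (hT : 0 < T) (ha : -1 < a) :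
    ∫⁻ u, truncKernel T a u < ∞ := by
  have hpos : IntervalIntegrable (fun u : ℝ => |u| ^ a) volume 0 T := by
    refine (intervalIntegral.intervalIntegrable_rpow' (a := 0) (b := T) ha).congr ?_
    intro u hu
    rw [Set.uIoc_of_le hT.le] at hu
    simp only [abs_of_pos hu.1]
  have hneg : IntervalIntegrable (fun u : ℝ => |u| ^ a) volume (-T) 0 := by
    have := (hpos.comp_sub_left 0).symm
    simpa using this
  have hint := hneg.trans hpos
  rw [intervalIntegrable_iff_integrableOn_Icc_of_le (by linarith)] at hint
  unfold truncKernel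
  rw [lintegral_indicator measurableSet_Icc]
  exact hint.lintegral_lt_top

lemma enorm_intervalIntegral_le {a b : ℝ} (hab : a ≤ b) (g : ℝ → ℝ) :
    ‖∫ x in a..b, g x‖ₑ ≤ ∫⁻ x in Set.Ioc a b, ‖g x‖ₑ := by
  rw [intervalIntegral.integral_of_le hab]
  exact enorm_integral_le_lintegral_enorm _

/-- Integrating a translation kernel against a sliding window costs the window length: after the
substitution `σ₂ = s₂ + u` all domains are fixed, and Tonelli lets `s₂` be integrated first. -/
lemma lintegral_window (f : ℝ → ℝ≥0∞) (hf : Measurable f) (c h : ℝ) :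
    ∫⁻ s₂, ∫⁻ σ₁ in Set.Ioc (c - h) c, ∫⁻ σ₂ in Set.Ioc (s₂ - h) s₂, f (σ₁ - σ₂)
      = ENNReal.ofReal h * ENNReal.ofReal h * ∫⁻ u, f u := by
  have shift : ∀ s₂ σ₁ : ℝ, ∫⁻ σ₂ in Set.Ioc (s₂ - h) s₂, f (σ₁ - σ₂)
      = ∫⁻ u in Set.Ioc (-h) 0, f (σ₁ - (u + s₂)) := by
    intro s₂ σ₁
    rw [← lintegral_indicator measurableSet_Ioc, ← lintegral_indicator measurableSet_Ioc,
      ← lintegral_add_right_eq_self _ s₂]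
    refine lintegral_congr fun u => ?_
    by_cases hu : u ∈ Set.Ioc (-h) 0
    · rw [Set.indicator_of_mem hu, Set.indicator_of_mem]
      exact ⟨by linarith [hu.1], by linarith [hu.2]⟩
    · rw [Set.indicator_of_notMem hu, Set.indicator_of_notMem]
      exact fun hu' => hu ⟨by linarith [hu'.1], by linarith [hu'.2]⟩
  have inner : ∀ σ₁ u : ℝ, ∫⁻ s₂, f (σ₁ - (u + s₂)) = ∫⁻ v, f v := by
    intro σ₁ u
    rw [← lintegral_sub_left_eq_self f (σ₁ - u)]
    simp only [sub_sub]
  simp_rw [shift]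
  rw [lintegral_lintegral_swap]
  · have : ∀ σ₁ : ℝ, ∫⁻ s₂, ∫⁻ u in Set.Ioc (-h) 0, f (σ₁ - (u + s₂))
        = ENNReal.ofReal h * ∫⁻ v, f v := by
      intro σ₁
      rw [lintegral_lintegral_swap (by fun_prop)]
      simp_rw [inner]
      simp [mul_comm]
    simp_rw [this]
    simp
    ring
  · refine Measurable.aemeasurable ?_
    have : Measurable fun p : (ℝ × ℝ) × ℝ => f (p.1.2 - (p.2 + p.1.1)) := by fun_prop
    exact this.lintegral_prod_right'

lemma lintegral_exp_le (lam N : ℝ) (hlam : 0 < lam) (hN : 0 ≤ N) :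
    ∫⁻ s in Set.Ioc 0 N, ENNReal.ofReal (Real.exp (-lam * (N - s))) ≤ ENNReal.ofReal lam⁻¹ := by
  have hcont : Continuous fun s : ℝ => Real.exp (-lam * (N - s)) := by fun_prop
  rw [← ofReal_integral_eq_lintegral_ofReal
    ((intervalIntegrable_iff_integrableOn_Ioc_of_le hN).1 (hcont.intervalIntegrable 0 N))
    (Filter.Eventually.of_forall fun s => (Real.exp_pos _).le),
    ← intervalIntegral.integral_of_le hN]
  apply ENNReal.ofReal_le_ofReal
  have hd : ∀ s ∈ Set.uIcc 0 N, HasDerivAt (fun s : ℝ => lam⁻¹ * Real.exp (-lam * (N - s)))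
      (Real.exp (-lam * (N - s))) s := by
    intro s _
    have h1 : HasDerivAt (fun s : ℝ => -lam * (N - s)) (-lam * (-1)) s :=
      ((hasDerivAt_id s).const_sub N).const_mul (-lam)
    refine (h1.exp.const_mul lam⁻¹).congr_deriv ?_
    rw [neg_mul_neg, mul_one, mul_comm, mul_assoc, mul_inv_cancel₀ hlam.ne', mul_one]
  rw [intervalIntegral.integral_eq_sub_of_hasDerivAt hd (hcont.intervalIntegrable 0 N)]
  have := mul_pos (inv_pos.2 hlam) (Real.exp_pos (-lam * (N - 0)))
  simp only [sub_self, mul_zero, Real.exp_zero, mul_one]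
  linarith

/-- Key quadruple-integral estimate (scalar form): for `H ∈ (1/2,1)` and `T > 0` there is
`C = C(H,T)` such that for every `λ > 0`, step size `h > 0` and `n ∈ ℕ` with `nh ≤ T`,
with `⌊s⌋_h := h⌊s/h⌋`,
`∫₀^{nh}∫₀^{nh}∫_{⌊s₁⌋_h}^{s₁}∫_{⌊s₂⌋_h}^{s₂}
  e^{-λ(nh-s₁)} e^{-λ(nh-s₂)} |σ₁-σ₂|^(2H-2) dσ₂ dσ₁ ds₂ ds₁ ≤ C h² λ⁻¹`. -/
theorem quadruple_integral_estimate_scalar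
    (H T : ℝ) (hH : H ∈ Set.Ioo (1/2 : ℝ) 1) (hT : 0 < T) :
    ∃ C : ℝ, 0 < C ∧ ∀ (lam h : ℝ) (n : ℕ), 0 < lam → 0 < h → n*h ≤ T →
      (∫ s₁ in (0:ℝ)..(n*h), ∫ s₂ in (0:ℝ)..(n*h),
        ∫ σ₁ in (h*(⌊s₁/h⌋ : ℝ))..s₁, ∫ σ₂ in (h*(⌊s₂/h⌋ : ℝ))..s₂,
          Real.exp (-lam*(n*h - s₁)) * Real.exp (-lam*(n*h - s₂)) * |σ₁ - σ₂| ^ (2*H - 2))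
      ≤ C * h^2 * lam⁻¹ := by
  have ha : -1 < 2 * H - 2 := by linarith [hH.1]
  set f := truncKernel T (2 * H - 2) with hf
  set K := ∫⁻ u, f u with hK
  have hKtop : K ≠ ∞ := (lintegral_truncKernel_lt_top T (2 * H - 2) hT ha).ne
  refine ⟨K.toReal + 1, by positivity, fun lam h n hlam hh hn => ?_⟩
  set N : ℝ := n * h with hNdef
  have hN : 0 ≤ N := by positivity
  have hfl : ∀ s : ℝ, h * (⌊s / h⌋ : ℝ) ≤ s := fun s => by
    have := Int.floor_le (s / h)
    rw [le_div_iff₀ hh] at this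
    linarith
  have hfl' : ∀ s : ℝ, s - h ≤ h * (⌊s / h⌋ : ℝ) := fun s => by
    have := (Int.lt_floor_add_one (s / h)).le
    rw [div_le_iff₀ hh] at this
    linarith
  have hfl0 : ∀ s : ℝ, 0 ≤ s → 0 ≤ h * (⌊s / h⌋ : ℝ) := fun s hs => by
    have : (0 : ℤ) ≤ ⌊s / h⌋ := Int.floor_nonneg.2 (by positivity)
    have : (0 : ℝ) ≤ (⌊s / h⌋ : ℝ) := by exact_mod_cast this
    positivity
  have pointwise : ∀ s₁ ∈ Set.Ioc 0 N, ∀ s₂ ∈ Set.Ioc 0 N,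
      ∀ σ₁ ∈ Set.Ioc (h * (⌊s₁ / h⌋ : ℝ)) s₁, ∀ σ₂ ∈ Set.Ioc (h * (⌊s₂ / h⌋ : ℝ)) s₂,
      ‖Real.exp (-lam * (N - s₁)) * Real.exp (-lam * (N - s₂)) * |σ₁ - σ₂| ^ (2 * H - 2)‖ₑ
        ≤ ENNReal.ofReal (Real.exp (-lam * (N - s₁))) * f (σ₁ - σ₂) := by
    intro s₁ hs₁ s₂ hs₂ σ₁ hσ₁ σ₂ hσ₂
    have h1 := hfl0 s₁ hs₁.1.le
    have h2 := hfl0 s₂ hs₂.1.le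
    have hmem : σ₁ - σ₂ ∈ Set.Icc (-T) T :=
      ⟨by linarith [hσ₁.1, hσ₂.2, hs₂.2], by linarith [hσ₁.2, hσ₂.1, hs₁.2]⟩
    have hexp : Real.exp (-lam * (N - s₂)) ≤ 1 := by
      rw [Real.exp_le_one_iff]
      nlinarith [hs₂.2]
    rw [hf, truncKernel, Set.indicator_of_mem hmem, ← ENNReal.ofReal_mul (Real.exp_pos _).le,
      Real.enorm_of_nonneg (by positivity)]
    apply ENNReal.ofReal_le_ofReal
    gcongr
    exact mul_le_of_le_one_right (Real.exp_pos _).le hexp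
  have hfm : Measurable f := measurable_truncKernel T _
  have key : ‖∫ s₁ in (0:ℝ)..N, ∫ s₂ in (0:ℝ)..N,
        ∫ σ₁ in (h*(⌊s₁/h⌋ : ℝ))..s₁, ∫ σ₂ in (h*(⌊s₂/h⌋ : ℝ))..s₂,
          Real.exp (-lam*(N - s₁)) * Real.exp (-lam*(N - s₂)) * |σ₁ - σ₂| ^ (2*H - 2)‖ₑ
      ≤ ENNReal.ofReal lam⁻¹ * (ENNReal.ofReal h * ENNReal.ofReal h * K) := by
    calc _ ≤ ∫⁻ s₁ in Set.Ioc 0 N, ENNReal.ofReal (Real.exp (-lam * (N - s₁))) *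
          (ENNReal.ofReal h * ENNReal.ofReal h * K) := by
          refine (enorm_intervalIntegral_le hN _).trans ?_
          refine setLIntegral_mono' measurableSet_Ioc fun s₁ hs₁ => ?_
          rw [hK, ← lintegral_window f hfm s₁ h,
            ← lintegral_const_mul' _ _ ENNReal.ofReal_ne_top]
          refine ((enorm_intervalIntegral_le hN _).trans ?_).trans
            (setLIntegral_le_lintegral (Set.Ioc 0 N) _)
          refine setLIntegral_mono' measurableSet_Ioc fun s₂ hs₂ => ?_
          rw [← lintegral_const_mul' _ _ ENNReal.ofReal_ne_top]
          refine ((enorm_intervalIntegral_le (hfl s₁) _).trans ?_).trans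
            (lintegral_mono_set (Set.Ioc_subset_Ioc_left (hfl' s₁)))
          refine setLIntegral_mono' measurableSet_Ioc fun σ₁ hσ₁ => ?_
          rw [← lintegral_const_mul' _ _ ENNReal.ofReal_ne_top]
          refine ((enorm_intervalIntegral_le (hfl s₂) _).trans ?_).trans
            (lintegral_mono_set (Set.Ioc_subset_Ioc_left (hfl' s₂)))
          exact setLIntegral_mono' measurableSet_Ioc fun σ₂ hσ₂ =>
            pointwise s₁ hs₁ s₂ hs₂ σ₁ hσ₁ σ₂ hσ₂
      _ = (∫⁻ s₁ in Set.Ioc 0 N, ENNReal.ofReal (Real.exp (-lam * (N - s₁)))) *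
          (ENNReal.ofReal h * ENNReal.ofReal h * K) :=
          lintegral_mul_const _ (by fun_prop)
      _ ≤ _ := by
          gcongr
          exact lintegral_exp_le lam N hlam hN
  have hreal := ENNReal.toReal_mono
    (ENNReal.mul_ne_top ENNReal.ofReal_ne_top
      (ENNReal.mul_ne_top (ENNReal.mul_ne_top ENNReal.ofReal_ne_top ENNReal.ofReal_ne_top) hKtop))
    key
  simp only [toReal_enorm, ENNReal.toReal_mul, ENNReal.toReal_ofReal hh.le,
    ENNReal.toReal_ofReal (inv_pos.2 hlam).le] at hreal
  have hslack : 0 < h ^ 2 * lam⁻¹ := by positivity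
  refine (Real.le_norm_self _).trans (hreal.trans ?_)
  linear_combination hslack.le
end
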